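/- Let α ∈ (0,1) be irrational and j > 0, and write r_{k_j} = Σ_{h=2}^N c_h q_h in its Ostrowski representation (so c_0 = c_1 = 0). Then k_j = Σ_{h=2}^N c_h p_h and j = Σ_{h=2}^N c_h (q_h − a_1 p_h). -/

import Mathlib

open Filter Finset

noncomputable section

/-- The Gauss map `G(x) = {1/x}` (with `G(0) = 0`, since `0⁻¹ = 0` in Lean). -/
def gaussMap (x : ℝ) : ℝ := Int.fract x⁻¹

/-- `α_m = G^m(α)`. -/
def gaussIter (α : ℝ) (m : ℕ) : ℝ := gaussMap^[m] α

/-- The `h`-th partial quotient `a_h` of `α` (meaningful for `h ≥ 1`):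
`a_h = ⌊(G^{h-1} α)⁻¹⌋`. -/
def pq (α : ℝ) (h : ℕ) : ℕ := ⌊(gaussIter α (h - 1))⁻¹⌋₊

/-- Denominators `q_n` of the convergents of `α`:
`q_0 = 1`, `q_1 = a_1`, `q_{n+2} = a_{n+2} q_{n+1} + q_n`. -/
def qden (α : ℝ) : ℕ → ℕ
  | 0 => 1
  | 1 => pq α 1
  | (n + 2) => pq α (n + 2) * qden α (n + 1) + qden α n

/-- Numerators `p_n` of the convergents of `α`:
`p_0 = 0`, `p_1 = 1`, `p_{n+2} = a_{n+2} p_{n+1} + p_n`. -/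
def pnum (α : ℝ) : ℕ → ℕ
  | 0 => 0
  | 1 => 1
  | (n + 2) => pq α (n + 2) * pnum α (n + 1) + pnum α n

/-- `f_n = (-1)^n (q_n α - p_n)`. -/
def fseq (α : ℝ) (n : ℕ) : ℝ := (-1) ^ n * ((qden α n : ℝ) * α - (pnum α n : ℝ))

/-- `r_k = min {r ≥ 0 : ⌊r α⌋ = k}`. -/
def rmin (α : ℝ) (k : ℕ) : ℕ := sInf {r : ℕ | ⌊(r : ℝ) * α⌋ = (k : ℤ)}

/-- `t_k = #{r ≥ 0 : ⌊r α⌋ = k}`. -/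
def tcount (α : ℝ) (k : ℕ) : ℕ := Set.ncard {r : ℕ | ⌊(r : ℝ) * α⌋ = (k : ℤ)}

/-- `(k_j)_{j ≥ 0}`: the increasing enumeration of `{k : t_k = a_1 + 1}`. -/
def kseq (α : ℝ) (j : ℕ) : ℕ := Nat.nth (fun k => tcount α k = pq α 1 + 1) j

/-- The gaps `g_j = r_{k_j} - r_{k_{j-1}}` (for `j ≥ 1`). -/
def gseq (γ : ℝ) (j : ℕ) : ℕ := rmin γ (kseq γ j) - rmin γ (kseq γ (j - 1))

/-- `(j_h)_{h ≥ 0}`: the increasing enumeration of those `j ≥ 1` with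
`g_j = q_2 + q_1`. -/
def jbig (γ : ℝ) (h : ℕ) : ℕ :=
  Nat.nth (fun j => 1 ≤ j ∧ gseq γ j = qden γ 2 + qden γ 1) h

/-- `ᾱ_1 = G(α)/(1 - G(α))`. -/
def abar (α : ℝ) : ℝ := gaussIter α 1 / (1 - gaussIter α 1)

/-- The Ostrowski representation `r = ∑_{h=0}^N c_h q_h` with `0 ≤ c_h ≤ a_{h+1}`,
`c_{h-1} = 0` whenever `c_h = a_{h+1}`, and `c_N > 0`; `N = ord r`. -/
def IsOstrowski (α : ℝ) (r N : ℕ) (c : ℕ → ℕ) : Prop :=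
  r = ∑ h ∈ Finset.range (N + 1), c h * qden α h ∧
  (∀ h, c h ≤ pq α (h + 1)) ∧
  (∀ h, c (h + 1) = pq α (h + 2) → c h = 0) ∧
  0 < c N ∧ ∀ h, N < h → c h = 0

/-- The order `ord r` of a positive integer `r`. -/
def ordOst (α : ℝ) (r : ℕ) : ℕ := sInf {N | ∃ c, IsOstrowski α r N c}

/-- `s(y) = 2 χ_{[0,1/2)}({y}) - 1`. -/
def sfun (y : ℝ) : ℝ := if Int.fract y < 1 / 2 then 1 else -1

/-- `S_n(α, β) = ∑_{r=0}^n s({r α + β})`. -/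
def Sgen (α β : ℝ) (n : ℕ) : ℝ := ∑ r ∈ Finset.range (n + 1), sfun ((r : ℝ) * α + β)

/-- `S_n(α) = S_n(α, 0)`. -/
def Ssum (α : ℝ) (n : ℕ) : ℝ := Sgen α 0 n

/-- `max_{0 ≤ n ≤ r} S_n(α)`. -/
def maxS (α : ℝ) (r : ℕ) : ℝ := sSup (Ssum α '' Set.Iic r)

/-- `min_{0 ≤ n ≤ r} S_n(α)`. -/
def minS (α : ℝ) (r : ℕ) : ℝ := sInf (Ssum α '' Set.Iic r)

/-- `d_n(α, β) = ∑_{r=0}^{n-1} χ_{[0,β)}({r α}) - β n`. -/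
def ddisc (α β : ℝ) (n : ℕ) : ℝ :=
  (∑ r ∈ Finset.range n, if Int.fract ((r : ℝ) * α) < β then (1 : ℝ) else 0) - β * n

/-- `j(r) = max {j + sgn R₁ - 1, 0}` from the decomposition `r = r_{k_j} + R₁ q₁ + R₀`. -/
def jfun (j R1 : ℕ) : ℕ := if R1 = 0 then j - 1 else j

/-- `i(r) = k_j - j + max {R₁ - 1, 0}` from the decomposition `r = r_{k_j} + R₁ q₁ + R₀`. -/
def ifun (α : ℝ) (j R1 : ℕ) : ℕ := kseq α j - j + (R1 - 1)

/-- `S̃(r)` from the decomposition `r = r_{k_j} + R₁ q₁ + R₀`. -/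
def Stil (α : ℝ) (r R1 R0 : ℕ) : ℝ :=
  if R0 = 0 then (if R1 = 0 then sfun ((r : ℝ) * α) else 0)
  else if R1 = 0 then ∑ i ∈ Finset.Icc (r - R0) r, sfun ((i : ℝ) * α)
  else ∑ i ∈ Finset.Icc (r - R0 + 1) r, sfun ((i : ℝ) * α)

/-- `sup_{β ∈ (0,1)} |d_n(α, β)| = n D_n^*(α)`. -/
def nDsup (α : ℝ) (n : ℕ) : ℝ := sSup ((fun β => |ddisc α β n|) '' Set.Ioo (0 : ℝ) 1)

/-- The discrepancy `D_n^*(α) = sup_{β ∈ (0,1)} |d_n(α, β)| / n`. -/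
def Dstar (α : ℝ) (n : ℕ) : ℝ :=
  sSup ((fun β => |ddisc α β n| / (n : ℝ)) '' Set.Ioo (0 : ℝ) 1)

/-!
Each block `{r : ⌊r α⌋ = k}` is the interval `[r_k, r_{k+1})`, of length `a_1` or `a_1 + 1`, so
counting the long blocks below `k_j` gives `r_{k_j} = a_1 k_j + j`. It remains to identify `k_j`.

Let `δ = ∑_{h ≥ 2} c_h (q_h α - p_h)`, so that `∑ c_h p_h = r α - δ` for `r = r_{k_j}`. The terms
alternate in sign and `a_{h+1} f_h = f_{h-1} - f_{h+1}`, so the digit bounds `c_h ≤ a_{h+1}` alone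
give `-f_2 < δ < f_1`. The block of `k_j` being long means `k_j ≤ r α < k_j + f_1`. Hence
`k_j - f_1 < ∑ c_h p_h < k_j + f_1 + f_2`; as `f_1 < 1` and `f_1 + f_2 ≤ f_0 = α < 1`, the integer
`∑ c_h p_h` is `k_j`.
-/

theorem sum_alternating_mem_Ioo {R : Type*} [CommRing R] [LinearOrder R] [IsStrictOrderedRing R]
    {f c : ℕ → R} {n : ℕ} (hf : ∀ i, 0 < f i) (hc : ∀ i < n, 0 ≤ c i)
    (hcf : ∀ i < n, c i * f (i + 1) + f (i + 2) ≤ f i) :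
    ∑ i ∈ range n, (-1) ^ i * (c i * f (i + 1)) ∈ Set.Ioo (-f 1) (f 0) := by
  induction n generalizing f c with
  | zero => simpa using ⟨hf 1, hf 0⟩
  | succ n ih =>
    obtain ⟨tail_gt, tail_lt⟩ := ih (f := fun i ↦ f (i + 1)) (c := fun i ↦ c (i + 1))
      (fun i ↦ hf (i + 1)) (fun i hi ↦ hc (i + 1) (by lia)) (fun i hi ↦ hcf (i + 1) (by lia))
    have split_first : ∑ i ∈ range (n + 1), (-1) ^ i * (c i * f (i + 1)) =
        c 0 * f 1 - ∑ i ∈ range n, (-1) ^ i * (c (i + 1) * f (i + 1 + 1)) := by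
      simp [sum_range_succ', pow_succ, sub_eq_neg_add]
    have first_nonneg : 0 ≤ c 0 * f 1 := mul_nonneg (hc 0 n.succ_pos) (hf 1).le
    have first_le : c 0 * f 1 + f 2 ≤ f 0 := hcf 0 n.succ_pos
    rw [split_first]
    constructor <;> linarith

variable {α : ℝ}

section Convergents

theorem gaussIter_succ (m : ℕ) : gaussIter α (m + 1) = Int.fract (gaussIter α m)⁻¹ :=
  Function.iterate_succ_apply' gaussMap m α

theorem gaussIter_succ_mem_Ico (m : ℕ) : gaussIter α (m + 1) ∈ Set.Ico 0 1 := by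
  rw [gaussIter_succ]
  exact ⟨Int.fract_nonneg _, Int.fract_lt_one _⟩

theorem gaussIter_nonneg (h0 : 0 ≤ α) : ∀ m, 0 ≤ gaussIter α m
  | 0 => h0
  | m + 1 => (gaussIter_succ_mem_Ico m).1

theorem irrational_gaussIter (hirr : Irrational α) (m : ℕ) : Irrational (gaussIter α m) := by
  induction m with
  | zero => exact hirr
  | succ m ih =>
    rw [gaussIter_succ]
    exact ih.inv.sub_intCast _

theorem gaussIter_pos (hirr : Irrational α) (h0 : 0 < α) (m : ℕ) : 0 < gaussIter α m :=
  (gaussIter_nonneg h0.le m).lt_of_ne' (irrational_gaussIter hirr m).ne_zero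

theorem pq_add_gaussIter (h0 : 0 ≤ α) (m : ℕ) :
    (pq α (m + 1) : ℝ) + gaussIter α (m + 1) = (gaussIter α m)⁻¹ := by
  rw [gaussIter_succ, pq, Nat.add_sub_cancel,
    natCast_floor_eq_intCast_floor (inv_nonneg.2 (gaussIter_nonneg h0 m)), Int.floor_add_fract]

theorem one_le_pq_add_two (hirr : Irrational α) (m : ℕ) : 1 ≤ pq α (m + 2) := by
  obtain ⟨gauss_nonneg, gauss_lt_one⟩ := gaussIter_succ_mem_Ico (α := α) m
  have gauss_pos := gauss_nonneg.lt_of_ne' (irrational_gaussIter hirr (m + 1)).ne_zero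
  refine Nat.le_floor ?_
  simpa using (one_le_inv₀ gauss_pos).2 gauss_lt_one.le

theorem fseq_zero : fseq α 0 = α := by simp [fseq, qden, pnum]

theorem fseq_one : fseq α 1 = 1 - pq α 1 * α := by simp [fseq, qden, pnum]

theorem fseq_add_two (n : ℕ) : fseq α (n + 2) = fseq α n - pq α (n + 2) * fseq α (n + 1) := by
  simp only [fseq, qden, pnum]
  push_cast
  ring

theorem qden_mul_sub_pnum (n : ℕ) : (qden α n : ℝ) * α - pnum α n = (-1) ^ n * fseq α n := by
  simp [fseq, ← mul_assoc, ← mul_pow]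

theorem fseq_eq_prod_gaussIter (hirr : Irrational α) (h0 : 0 ≤ α) (n : ℕ) :
    fseq α n = ∏ i ∈ range (n + 1), gaussIter α i := by
  have pq_eq (m : ℕ) : (pq α (m + 1) : ℝ) = (gaussIter α m)⁻¹ - gaussIter α (m + 1) :=
    eq_sub_of_add_eq (pq_add_gaussIter h0 m)
  have ne_zero (m : ℕ) : gaussIter α m ≠ 0 := (irrational_gaussIter hirr m).ne_zero
  induction n using Nat.twoStepInduction with
  | zero => simp [fseq_zero, gaussIter]
  | one =>
    have gaussIter_zero : gaussIter α 0 = α := rfl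
    rw [fseq_one, pq_eq 0, prod_range_succ, prod_range_one, gaussIter_zero]
    field_simp [hirr.ne_zero]
    ring
  | more n ih ih' =>
    rw [fseq_add_two, ih, ih', pq_eq (n + 1)]
    simp only [prod_range_succ _ (n + 1), prod_range_succ _ (n + 2)]
    field_simp [ne_zero (n + 1)]
    ring

theorem fseq_pos (hirr : Irrational α) (h0 : 0 < α) (n : ℕ) : 0 < fseq α n := by
  rw [fseq_eq_prod_gaussIter hirr h0.le]
  exact prod_pos fun i _ ↦ gaussIter_pos hirr h0 i

theorem fseq_succ_add_le (hirr : Irrational α) (h0 : 0 < α) (n : ℕ) :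
    fseq α (n + 1) + fseq α (n + 2) ≤ fseq α n := by
  have one_le_pq : (1 : ℝ) ≤ pq α (n + 2) := mod_cast one_le_pq_add_two hirr n
  have := le_mul_of_one_le_left (fseq_pos hirr h0 (n + 1)).le one_le_pq
  linarith [fseq_add_two (α := α) n]

theorem sum_mul_qden_mul_sub_pnum_mem_Ioo (hirr : Irrational α) (h0 : 0 < α) {N : ℕ}
    {c : ℕ → ℕ} (hc : ∀ h ∈ Icc 2 N, c h ≤ pq α (h + 1)) :
    ∑ h ∈ Icc 2 N, (c h : ℝ) * (qden α h * α - pnum α h) ∈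
      Set.Ioo (-fseq α 2) (fseq α 1) := by
  have shift : ∑ h ∈ Icc 2 N, (c h : ℝ) * (qden α h * α - pnum α h) =
      ∑ i ∈ range (N - 1), (-1) ^ i * ((c (i + 2) : ℝ) * fseq α (i + 2)) := by
    rw [← Ico_add_one_right_eq_Icc, sum_Ico_eq_sum_range, Nat.add_sub_add_right N 1 1]
    refine sum_congr rfl fun i _ ↦ ?_
    rw [qden_mul_sub_pnum, add_comm 2 i]
    ring
  rw [shift]
  refine sum_alternating_mem_Ioo (f := fun i ↦ fseq α (i + 1)) (c := fun i ↦ (c (i + 2) : ℝ))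
    (fun i ↦ fseq_pos hirr h0 (i + 1)) (fun i _ ↦ Nat.cast_nonneg _) fun i hi ↦ ?_
  have digit_le : (c (i + 2) : ℝ) ≤ pq α (i + 3) :=
    mod_cast hc (i + 2) (mem_Icc.2 ⟨by lia, by lia⟩)
  have := mul_le_mul_of_nonneg_right digit_le (fseq_pos hirr h0 (i + 2)).le
  linarith [fseq_add_two (α := α) (i + 1)]

end Convergents

section FloorFibers

theorem setOf_floor_mul_eq (h0 : 0 < α) (k : ℕ) :
    {r : ℕ | ⌊(r : ℝ) * α⌋ = (k : ℤ)} = Set.Ico ⌈(k : ℝ) / α⌉₊ ⌈((k + 1 : ℕ) : ℝ) / α⌉₊ := by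
  ext r
  simp [Int.floor_eq_iff, Nat.ceil_le, Nat.lt_ceil, div_le_iff₀ h0, lt_div_iff₀ h0]

theorem rmin_eq_ceil (h0 : 0 < α) (h1 : α ≤ 1) (k : ℕ) : rmin α k = ⌈(k : ℝ) / α⌉₊ := by
  have ceil_lt_ceil : ⌈(k : ℝ) / α⌉₊ < ⌈((k + 1 : ℕ) : ℝ) / α⌉₊ := by
    rw [Nat.lt_ceil, lt_div_iff₀ h0]
    calc (⌈(k : ℝ) / α⌉₊ : ℝ) * α < (k / α + 1) * α := by
          gcongr
          exact Nat.ceil_lt_add_one (by positivity)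
      _ = k + α := by field_simp
      _ ≤ (k + 1 : ℕ) := by
          push_cast
          gcongr
  rw [rmin, setOf_floor_mul_eq h0, csInf_Ico ceil_lt_ceil]

theorem lt_rmin_iff (h0 : 0 < α) (h1 : α ≤ 1) {m k : ℕ} : m < rmin α k ↔ (m : ℝ) * α < k := by
  rw [rmin_eq_ceil h0 h1, Nat.lt_ceil, lt_div_iff₀ h0]

theorem le_rmin_mul (h0 : 0 < α) (h1 : α ≤ 1) (k : ℕ) : (k : ℝ) ≤ rmin α k * α :=
  not_lt.1 <| (lt_rmin_iff h0 h1).not.1 (lt_irrefl _)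

theorem rmin_succ (h0 : 0 < α) (h1 : α ≤ 1) (k : ℕ) :
    rmin α (k + 1) = rmin α k + tcount α k := by
  have rmin_mono : rmin α k ≤ rmin α (k + 1) := by
    simp only [rmin_eq_ceil h0 h1]
    gcongr
    simp
  rw [tcount, setOf_floor_mul_eq h0, ← rmin_eq_ceil h0 h1, ← rmin_eq_ceil h0 h1,
    ← coe_Ico, Set.ncard_coe_finset, Nat.card_Ico]
  lia

theorem tcount_eq_or_eq (h0 : 0 < α) (h1 : α ≤ 1) (k : ℕ) :
    tcount α k = pq α 1 ∨ tcount α k = pq α 1 + 1 := by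
  have pq_le : (pq α 1 : ℝ) ≤ α⁻¹ := Nat.floor_le (inv_nonneg.2 h0.le)
  have inv_le : α⁻¹ ≤ (pq α 1 + 1 : ℕ) := mod_cast (Nat.lt_floor_add_one α⁻¹).le
  have succ_div : ((k + 1 : ℕ) : ℝ) / α = k / α + α⁻¹ := by push_cast; ring
  have rmin_add (a : ℕ) : rmin α k + a = ⌈(k : ℝ) / α + a⌉₊ := by
    rw [rmin_eq_ceil h0 h1, Nat.ceil_add_natCast (by positivity)]
  have lower : rmin α k + pq α 1 ≤ rmin α (k + 1) := by
    rw [rmin_add, rmin_eq_ceil h0 h1, succ_div]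
    gcongr
  have upper : rmin α (k + 1) ≤ rmin α k + (pq α 1 + 1) := by
    rw [rmin_add, rmin_eq_ceil h0 h1, succ_div]
    gcongr
  rw [rmin_succ h0 h1] at lower upper
  lia

theorem rmin_eq_pq_mul_add_count (h0 : 0 < α) (h1 : α ≤ 1) (k : ℕ) :
    rmin α k = pq α 1 * k + Nat.count (fun i ↦ tcount α i = pq α 1 + 1) k := by
  induction k with
  | zero => simp [rmin_eq_ceil h0 h1]
  | succ k ih =>
    rw [rmin_succ h0 h1, Nat.count_succ, ih]
    rcases tcount_eq_or_eq h0 h1 k with short | long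
    · simp only [short, Nat.left_eq_add, one_ne_zero, if_false]
      ring
    · simp only [long, if_true]
      ring

theorem infinite_setOf_tcount_eq (hirr : Irrational α) (h0 : 0 < α) (h1 : α ≤ 1) :
    {k | tcount α k = pq α 1 + 1}.Infinite := by
  intro hfin
  obtain ⟨k, hk⟩ := exists_nat_gt (hfin.toFinset.card * α / fseq α 1)
  rw [div_lt_iff₀ (fseq_pos hirr h0 1), fseq_one] at hk
  have count_le : Nat.count (fun i ↦ tcount α i = pq α 1 + 1) k ≤ hfin.toFinset.card := by
    rw [Nat.count_eq_card_filter_range]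
    exact card_le_card fun i hi ↦ by simpa using (mem_filter.1 hi).2
  have rmin_le : (rmin α k : ℝ) ≤ pq α 1 * k + hfin.toFinset.card := by
    rw [rmin_eq_pq_mul_add_count h0 h1]
    exact_mod_cast Nat.add_le_add_left count_le _
  have := mul_le_mul_of_nonneg_right rmin_le h0.le
  linarith [le_rmin_mul h0 h1 k]

theorem tcount_kseq (hirr : Irrational α) (h0 : 0 < α) (h1 : α ≤ 1) (j : ℕ) :
    tcount α (kseq α j) = pq α 1 + 1 :=
  Nat.nth_mem_of_infinite (infinite_setOf_tcount_eq hirr h0 h1) j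

theorem rmin_kseq (hirr : Irrational α) (h0 : 0 < α) (h1 : α ≤ 1) (j : ℕ) :
    rmin α (kseq α j) = pq α 1 * kseq α j + j := by
  rw [rmin_eq_pq_mul_add_count h0 h1, kseq,
    Nat.count_nth_of_infinite (infinite_setOf_tcount_eq hirr h0 h1)]

theorem rmin_mul_lt_add_fseq_one (h0 : 0 < α) (h1 : α ≤ 1) {k : ℕ}
    (hk : tcount α k = pq α 1 + 1) : rmin α k * α < k + fseq α 1 := by
  have last_mem : rmin α k + pq α 1 < rmin α (k + 1) := by
    rw [rmin_succ h0 h1]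
    lia
  rw [lt_rmin_iff h0 h1] at last_mem
  push_cast at last_mem
  linarith [fseq_one (α := α)]

end FloorFibers

theorem eq_sum_mul_pnum_of_rmin_eq (hirr : Irrational α) (h0 : 0 < α) (h1 : α < 1) {k N : ℕ}
    {c : ℕ → ℕ} (hk : tcount α k = pq α 1 + 1) (hr : rmin α k = ∑ h ∈ Icc 2 N, c h * qden α h)
    (hc : ∀ h ∈ Icc 2 N, c h ≤ pq α (h + 1)) : k = ∑ h ∈ Icc 2 N, c h * pnum α h := by
  obtain ⟨delta_gt, delta_lt⟩ := sum_mul_qden_mul_sub_pnum_mem_Ioo hirr h0 hc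
  have delta_eq : ∑ h ∈ Icc 2 N, (c h : ℝ) * (qden α h * α - pnum α h) =
      rmin α k * α - (∑ h ∈ Icc 2 N, c h * pnum α h : ℕ) := by
    rw [hr]
    push_cast
    simp only [mul_sub, sum_sub_distrib, sum_mul, mul_assoc]
  rw [delta_eq] at delta_gt delta_lt
  have le_mul := le_rmin_mul h0 h1.le k
  have mul_lt := rmin_mul_lt_add_fseq_one h0 h1.le hk
  have fseq_le : fseq α 1 + fseq α 2 ≤ α :=
    (fseq_succ_add_le hirr h0 0).trans_eq fseq_zero
  have fseq_two_pos := fseq_pos hirr h0 2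
  refine le_antisymm (Nat.lt_add_one_iff.1 ?_) (Nat.lt_add_one_iff.1 ?_) <;>
  · rify at *
    linarith

theorem IsOstrowski.eq_sum_Icc_two {r N : ℕ} {c : ℕ → ℕ} (hOst : IsOstrowski α r N c)
    (hc0 : c 0 = 0) (hc1 : c 1 = 0) : r = ∑ h ∈ Icc 2 N, c h * qden α h := by
  rw [hOst.1]
  refine (sum_subset (fun h hh ↦ ?_) fun h hh hh' ↦ ?_).symm
  · simp only [mem_Icc, mem_range] at hh ⊢
    lia
  · obtain rfl | rfl : h = 0 ∨ h = 1 := by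
      simp only [mem_Icc, mem_range] at hh hh'
      lia
    · simp [hc0]
    · simp [hc1]

theorem kj_and_j_formula_general (hirr : Irrational α) (h0 : 0 < α) (h1 : α < 1) {j N : ℕ}
    {c : ℕ → ℕ} (hr : rmin α (kseq α j) = ∑ h ∈ Icc 2 N, c h * qden α h)
    (hc : ∀ h ∈ Icc 2 N, c h ≤ pq α (h + 1)) :
    kseq α j = ∑ h ∈ Icc 2 N, c h * pnum α h ∧
    (j : ℤ) = ∑ h ∈ Icc 2 N,
      (c h : ℤ) * ((qden α h : ℤ) - (pq α 1 : ℤ) * (pnum α h : ℤ)) := by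
  have hk := eq_sum_mul_pnum_of_rmin_eq hirr h0 h1 (tcount_kseq hirr h0 h1.le j) hr hc
  refine ⟨hk, ?_⟩
  calc (j : ℤ) = rmin α (kseq α j) - pq α 1 * kseq α j := by
        rw [rmin_kseq hirr h0 h1.le]
        push_cast
        ring
    _ = ∑ h ∈ Icc 2 N, (c h : ℤ) * (qden α h - pq α 1 * pnum α h) := by
        rw [hr, hk]
        push_cast
        simp only [mul_sum, ← sum_sub_distrib, mul_sub, mul_left_comm]

/-- if `r_{k_j} = ∑_{h=2}^N c_h q_h` is the Ostrowski representation
(so `c_0 = c_1 = 0`), then `k_j = ∑_{h=2}^N c_h p_h` and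
`j = ∑_{h=2}^N c_h (q_h - a_1 p_h)`. -/
theorem kj_and_j_formula (α : ℝ) (hirr : Irrational α) (h0 : 0 < α) (h1 : α < 1)
    (j : ℕ) (hj : 0 < j) (N : ℕ) (c : ℕ → ℕ)
    (hOst : IsOstrowski α (rmin α (kseq α j)) N c) (hc0 : c 0 = 0) (hc1 : c 1 = 0) :
    kseq α j = ∑ h ∈ Finset.Icc 2 N, c h * pnum α h ∧
    (j : ℤ) = ∑ h ∈ Finset.Icc 2 N,
      (c h : ℤ) * ((qden α h : ℤ) - (pq α 1 : ℤ) * (pnum α h : ℤ)) :=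
  kj_and_j_formula_general hirr h0 h1 (hOst.eq_sum_Icc_two hc0 hc1) fun h _ ↦ hOst.2.1 h
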